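/- Let D be an integral domain and ⋆ a semistar operation on D. Then D is ⋆-Noetherian if and only if D is ⋆_f-Noetherian. -/

import Mathlib

/-!
If `D` is ⋆-Noetherian, every nonzero ideal `I` contains a finitely generated ideal `J` with
`J^⋆ = I^⋆`, so `I^{⋆_f} = I^⋆` and the quasi-⋆-ideals are exactly the quasi-⋆_f-ideals.
Conversely, `I ⊆ I^{⋆_f} ⊆ I^⋆` makes every quasi-⋆-ideal a quasi-⋆_f-ideal, so the chain
condition passes from ⋆_f to ⋆.
-/

open scoped Pointwise

section SemistarDefs

variable {D : Type*} [CommRing D] [IsDomain D]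
variable {K : Type*} [Field K] [Algebra D K] [IsFractionRing D K]

/-- `star` is a semistar operation on the integral domain `D` with quotient field `K`:
a map on (nonzero) `D`-submodules of `K` satisfying `(xE)^⋆ = x·E^⋆`, monotonicity,
extensivity and idempotence. -/
structure IsSemistarOperation (star : Submodule D K → Submodule D K) : Prop where
  ne_bot : ∀ {E : Submodule D K}, E ≠ ⊥ → star E ≠ ⊥
  map_smul : ∀ (x : K), x ≠ 0 → ∀ {E : Submodule D K}, E ≠ ⊥ →
    star (Submodule.map (LinearMap.mulLeft D x) E) = Submodule.map (LinearMap.mulLeft D x) (star E)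
  mono : ∀ {E F : Submodule D K}, E ≠ ⊥ → F ≠ ⊥ → E ≤ F → star E ≤ star F
  le_star : ∀ {E : Submodule D K}, E ≠ ⊥ → E ≤ star E
  star_star : ∀ {E : Submodule D K}, E ≠ ⊥ → star (star E) = star E

/-- The image in `K` of an ideal `I` of `D`, as a `D`-submodule of `K`. -/
def idealExt (K : Type*) [Field K] [Algebra D K] (I : Ideal D) : Submodule D K :=
  Submodule.map (Algebra.linearMap D K) I

/-- `I` is a quasi-⋆-ideal: a nonzero ideal of `D` with `I = I^⋆ ∩ D`. -/
def QuasiStarIdeal (star : Submodule D K → Submodule D K) (I : Ideal D) : Prop :=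
  I ≠ ⊥ ∧ Submodule.comap (Algebra.linearMap D K) (star (idealExt K I)) = I

/-- `P` is a quasi-⋆-prime: a prime ideal which is a quasi-⋆-ideal. -/
def QuasiStarPrime (star : Submodule D K → Submodule D K) (P : Ideal D) : Prop :=
  P.IsPrime ∧ QuasiStarIdeal star P

/-- `M` is a quasi-⋆-maximal ideal: maximal in the set of proper quasi-⋆-ideals of `D`. -/
def QuasiStarMaximal (star : Submodule D K → Submodule D K) (M : Ideal D) : Prop :=
  QuasiStarIdeal star M ∧ M ≠ ⊤ ∧
    ∀ J : Ideal D, QuasiStarIdeal star J → J ≠ ⊤ → M ≤ J → J = M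

/-- The finite-type semistar operation `⋆_f` associated to `⋆`:
`E^{⋆_f} = ⋃ { F^⋆ : F nonzero finitely generated, F ⊆ E }`. -/
def finTypeOp (star : Submodule D K → Submodule D K) : Submodule D K → Submodule D K :=
  fun E => ⨆ (F : Submodule D K) (_ : F ≠ ⊥) (_ : F.FG) (_ : F ≤ E), star F

/-- The extension `E·D_Q` of a `D`-submodule `E` of `K` to the localization of `D` at
(the complement of) `Q`, described as `{ x ∈ K : s·x ∈ E for some s ∉ Q }`. -/
def extendToPrime (Q : Ideal D) (E : Submodule D K) : Submodule D K :=
  Submodule.span D {x : K | ∃ s : D, s ∉ Q ∧ algebraMap D K s * x ∈ E}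

/-- The stable semistar operation of finite type `⋆̃` associated to `⋆`:
`E^⋆̃ = ⋂ { E·D_Q : Q a quasi-⋆_f-maximal ideal of D }`. -/
def stableOp (star : Submodule D K → Submodule D K) : Submodule D K → Submodule D K :=
  fun E => ⨅ (Q : Ideal D) (_ : QuasiStarMaximal (finTypeOp star) Q), extendToPrime Q E

/-- A rank-one discrete valuation ring: a (domain which is a) local PID which is not a field. -/
def IsDVR (R : Type*) [CommRing R] : Prop :=
  ∃ h : IsDomain R, @IsDiscreteValuationRing R _ h

/-- A valuation domain. -/
def IsValuationDomain (R : Type*) [CommRing R] : Prop :=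
  ∃ h : IsDomain R, @ValuationRing R _ h

/-- `D` is a ⋆-almost Dedekind domain: `D_M` is a rank-one discrete valuation ring for
every quasi-⋆_f-maximal ideal `M` of `D`. -/
def StarADD (star : Submodule D K → Submodule D K) : Prop :=
  ∀ (M : Ideal D) [M.IsPrime], QuasiStarMaximal (finTypeOp star) M →
    IsDVR (Localization.AtPrime M)

/-- `D` is a Prüfer ⋆-multiplication domain: `D_M` is a valuation domain for every
quasi-⋆_f-maximal ideal `M` of `D`. -/
def StarPMD (star : Submodule D K → Submodule D K) : Prop :=
  ∀ (M : Ideal D) [M.IsPrime], QuasiStarMaximal (finTypeOp star) M →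
    IsValuationDomain (Localization.AtPrime M)

/-- `D` is ⋆-Noetherian: ascending chain condition on quasi-⋆-ideals. -/
def StarNoetherian (star : Submodule D K → Submodule D K) : Prop :=
  ∀ c : ℕ →o Ideal D, (∀ n, QuasiStarIdeal star (c n)) → ∃ n, ∀ m, n ≤ m → c m = c n

/-- `D` is a ⋆-Dedekind domain: ⋆-Noetherian and a P⋆MD. -/
def StarDedekind (star : Submodule D K → Submodule D K) : Prop :=
  StarNoetherian star ∧ StarPMD star

/-- `D` has the ⋆_f-finite character property: every nonzero element of `D` lies in only
finitely many quasi-⋆_f-maximal ideals. -/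
def StarFiniteCharacter (star : Submodule D K → Submodule D K) : Prop :=
  ∀ d : D, d ≠ 0 → {M : Ideal D | QuasiStarMaximal (finTypeOp star) M ∧ d ∈ M}.Finite

/-- The `v`-operation `E ↦ (D : (D : E))`. -/
def vOp : Submodule D K → Submodule D K := fun E => 1 / (1 / E)

/-- A nonzero `D`-submodule `E` of `K` is quasi-∗-invertible if `(E·(D^∗ : E))^∗ = D^∗`. -/
def QuasiStarInvertible (star : Submodule D K → Submodule D K) (E : Submodule D K) : Prop :=
  star (E * (star 1 / E)) = star (1 : Submodule D K)

/-- `D` has the ∗-cancellation law: for nonzero fractional ideals `A`, `B`, `C`,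
`(AB)^∗ = (AC)^∗` implies `B^∗ = C^∗`. -/
def StarCancellation (star : Submodule D K → Submodule D K) : Prop :=
  ∀ A B C : Submodule D K, A ≠ ⊥ → B ≠ ⊥ → C ≠ ⊥ →
    IsFractional (nonZeroDivisors D) A → IsFractional (nonZeroDivisors D) B →
    IsFractional (nonZeroDivisors D) C →
    star (A * B) = star (A * C) → star B = star C

/-- The ∗-dimension of `D`: the supremum of the lengths of chains of quasi-∗-prime ideals
of `D` (between `(0)` and a quasi-∗-prime). -/
noncomputable def starDim (star : Submodule D K → Submodule D K) : ℕ∞ :=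
  ⨆ (k : ℕ) (_ : ∃ c : Fin k → Ideal D, StrictMono c ∧ ∀ i, QuasiStarPrime star (c i)),
    (k : ℕ∞)

/-- A submodule `T` of `K` (containing the image of an integral domain with quotient
field `K`) is integrally closed (in `K`) if every `x ∈ K` satisfying a monic polynomial
equation with coefficients in `T` belongs to `T`. -/
def IntegrallyClosedSub (T : Submodule D K) : Prop :=
  ∀ x : K, (∃ (n : ℕ) (c : Fin n → K), (∀ i, c i ∈ T) ∧
    x ^ n = ∑ i : Fin n, c i * x ^ (i : ℕ)) → x ∈ T

/-- The content ideal `c(p)` of a polynomial: the ideal generated by its coefficients. -/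
def contentIdeal (p : Polynomial D) : Ideal D := Ideal.span (Set.range p.coeff)

/-- The multiplicative set `N(⋆) = { h ∈ D[X] : h ≠ 0, c(h)^⋆ = D^⋆ }` (as a submonoid,
via the closure of this multiplicatively closed set). -/
noncomputable def nagataMonoid (star : Submodule D K → Submodule D K) : Submonoid (Polynomial D) :=
  Submonoid.closure
    {p : Polynomial D | p ≠ 0 ∧ star (idealExt K (contentIdeal p)) = star (1 : Submodule D K)}

/-- The Nagata ring `Na(D,⋆) = D[X]_{N(⋆)}`. -/
abbrev NagataRing (star : Submodule D K → Submodule D K) :=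
  Localization (nagataMonoid star)

/-- `V` is a valuation overring of `D` (inside the quotient field `K`): `D ⊆ V ⊆ K` and
for every nonzero `x ∈ K`, `x ∈ V` or `x⁻¹ ∈ V`. -/
def IsValuationOverring (D : Type*) [CommRing D] {K : Type*} [Field K] [Algebra D K]
    (V : Subring K) : Prop :=
  (∀ d : D, algebraMap D K d ∈ V) ∧ ∀ x : K, x ≠ 0 → (x ∈ V ∨ x⁻¹ ∈ V)

/-- `V` is a ∗-valuation overring of `D`: a valuation overring such that `F^∗ ⊆ FV` for
every nonzero finitely generated `D`-submodule `F` of `K`. -/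
def IsStarValuationOverring (star : Submodule D K → Submodule D K) (V : Subring K) : Prop :=
  IsValuationOverring D V ∧
    ∀ F : Submodule D K, F ≠ ⊥ → F.FG →
      star F ≤ Submodule.span D ((F : Set K) * (V : Set K))

/-- `D` is a Krull domain: there is a family of rank-one discrete valuation overrings of `D`
with quotient field `K` whose intersection is `D`, with finite character. -/
def IsKrullDomain (D : Type*) [CommRing D] (K : Type*) [Field K] [Algebra D K] : Prop :=
  ∃ 𝒱 : Set (Subring K),
    (∀ V ∈ 𝒱, (∀ d : D, algebraMap D K d ∈ V) ∧ IsDVR V ∧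
      ∀ x : K, ∃ a ∈ V, ∃ b ∈ V, b ≠ 0 ∧ x * b = a) ∧
    (⋂ V ∈ 𝒱, (V : Set K)) = Set.range (algebraMap D K) ∧
    ∀ d : D, d ≠ 0 → {V ∈ 𝒱 | ¬ ∃ y ∈ V, algebraMap D K d * y = 1}.Finite

end SemistarDefs

section Statement

variable {D : Type*} [CommRing D] [IsDomain D]
variable {K : Type*} [Field K] [Algebra D K] [IsFractionRing D K]

section NonzeroClosure

omit [IsDomain D] [IsFractionRing D K]

/-- A closure operation on the nonzero `D`-submodules of `K`, i.e. a semistar operation without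
the homogeneity axiom `(xE)^⋆ = x·E^⋆`. As in `IsSemistarOperation`, the value of `star` at `⊥`
is unconstrained. -/
structure IsNonzeroClosure (star : Submodule D K → Submodule D K) : Prop where
  mono : ∀ {E F : Submodule D K}, E ≠ ⊥ → F ≠ ⊥ → E ≤ F → star E ≤ star F
  le_star : ∀ {E : Submodule D K}, E ≠ ⊥ → E ≤ star E
  star_star : ∀ {E : Submodule D K}, E ≠ ⊥ → star (star E) = star E

/-- The ideal `I^⋆ ∩ D`. For nonzero `I` this is the smallest quasi-⋆-ideal containing `I`. -/
def quasiStarClosure (star : Submodule D K → Submodule D K) (I : Ideal D) : Ideal D :=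
  Submodule.comap (Algebra.linearMap D K) (star (idealExt K I))

variable {star : Submodule D K → Submodule D K} {E F : Submodule D K} {I J : Ideal D}

theorem IsSemistarOperation.isNonzeroClosure (hstar : IsSemistarOperation star) :
    IsNonzeroClosure star where
  mono := hstar.mono
  le_star := hstar.le_star
  star_star := hstar.star_star

theorem IsNonzeroClosure.star_le_star_of_le_star (hstar : IsNonzeroClosure star)
    (hE : E ≠ ⊥) (hF : F ≠ ⊥) (h : E ≤ star F) : star E ≤ star F :=
  calc
    star E ≤ star (star F) := hstar.mono hE (ne_bot_of_le_ne_bot hF (hstar.le_star hF)) h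
    _ = star F := hstar.star_star hF

theorem star_le_finTypeOp (hF : F ≠ ⊥) (hfg : F.FG) (h : F ≤ E) : star F ≤ finTypeOp star E :=
  le_iSup₂_of_le F hF (le_iSup₂_of_le hfg h le_rfl)

theorem IsNonzeroClosure.finTypeOp_le_star (hstar : IsNonzeroClosure star) (hE : E ≠ ⊥) :
    finTypeOp star E ≤ star E :=
  iSup₂_le fun _ hF => iSup₂_le fun _ hFE => hstar.mono hF hE hFE

theorem IsNonzeroClosure.le_finTypeOp (hstar : IsNonzeroClosure star) (E : Submodule D K) :
    E ≤ finTypeOp star E := by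
  intro x hx
  rcases eq_or_ne x 0 with rfl | hx0
  · exact zero_mem _
  have hspan : Submodule.span D {x} ≠ ⊥ := by simpa using hx0
  have hxE : Submodule.span D {x} ≤ E := (Submodule.span_singleton_le_iff_mem _ _).2 hx
  exact star_le_finTypeOp hspan (Submodule.fg_span_singleton x) hxE
    (hstar.le_star hspan (Submodule.mem_span_singleton_self x))

theorem IsNonzeroClosure.finTypeOp_eq_star_of_fg (hstar : IsNonzeroClosure star)
    (hF : F ≠ ⊥) (hfg : F.FG) (hFE : F ≤ E) (hE : E ≤ star F) :
    finTypeOp star E = star E := by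
  have hE0 : E ≠ ⊥ := ne_bot_of_le_ne_bot hF hFE
  exact (hstar.finTypeOp_le_star hE0).antisymm <|
    (hstar.star_le_star_of_le_star hE0 hF hE).trans (star_le_finTypeOp hF hfg hFE)

theorem starNoetherian_iff_wellFoundedGT :
    StarNoetherian star ↔ WellFoundedGT {I : Ideal D // QuasiStarIdeal star I} := by
  rw [wellFoundedGT_iff_monotone_chain_condition]
  constructor
  · intro hN a
    obtain ⟨n, hn⟩ := hN ⟨fun k => (a k).1, fun _ _ h => a.monotone h⟩ fun k => (a k).2
    exact ⟨n, fun m hm => Subtype.ext (hn m hm).symm⟩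
  · intro hN c hc
    obtain ⟨n, hn⟩ := hN ⟨fun k => ⟨c k, hc k⟩, fun _ _ h => c.monotone h⟩
    exact ⟨n, fun m hm => congrArg Subtype.val (hn m hm).symm⟩

theorem StarNoetherian.of_quasiStarIdeal_imp {star' : Submodule D K → Submodule D K}
    (hN : StarNoetherian star) (h : ∀ I, QuasiStarIdeal star' I → QuasiStarIdeal star I) :
    StarNoetherian star' :=
  fun c hc => hN c fun n => h _ (hc n)

variable [FaithfulSMul D K]

theorem idealExt_ne_bot (hI : I ≠ ⊥) : idealExt K I ≠ ⊥ :=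
  (Submodule.map_injective_of_injective (FaithfulSMul.algebraMap_injective D K)).ne_iff'
    (Submodule.map_bot _) |>.2 hI

namespace IsNonzeroClosure

theorem le_quasiStarClosure (hstar : IsNonzeroClosure star) (hI : I ≠ ⊥) :
    I ≤ quasiStarClosure star I :=
  Submodule.map_le_iff_le_comap.1 (hstar.le_star (idealExt_ne_bot hI))

theorem quasiStarClosure_le_of_le (hstar : IsNonzeroClosure star) (hI : I ≠ ⊥) (hJ : J ≠ ⊥)
    (h : I ≤ quasiStarClosure star J) : quasiStarClosure star I ≤ quasiStarClosure star J :=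
  Submodule.comap_mono <| hstar.star_le_star_of_le_star (idealExt_ne_bot hI) (idealExt_ne_bot hJ)
    (Submodule.map_le_iff_le_comap.2 h)

theorem quasiStarIdeal_quasiStarClosure (hstar : IsNonzeroClosure star) (hI : I ≠ ⊥) :
    QuasiStarIdeal star (quasiStarClosure star I) := by
  have hcl : quasiStarClosure star I ≠ ⊥ := ne_bot_of_le_ne_bot hI (hstar.le_quasiStarClosure hI)
  exact ⟨hcl, (hstar.quasiStarClosure_le_of_le hcl hI le_rfl).antisymm
    (hstar.le_quasiStarClosure hcl)⟩

theorem exists_fg_le_quasiStarClosure (hstar : IsNonzeroClosure star) (hN : StarNoetherian star)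
    (hI : I ≠ ⊥) : ∃ J : Ideal D, J ≠ ⊥ ∧ J.FG ∧ J ≤ I ∧ I ≤ quasiStarClosure star J := by
  have := starNoetherian_iff_wellFoundedGT.1 hN
  let closure (J : {J : Ideal D // J ≠ ⊥}) : {J : Ideal D // QuasiStarIdeal star J} :=
    ⟨quasiStarClosure star J, hstar.quasiStarIdeal_quasiStarClosure J.2⟩
  have hne : ∃ J : {J : Ideal D // J ≠ ⊥}, J.1.FG ∧ J.1 ≤ I := by
    obtain ⟨x, hxI, hx0⟩ := Submodule.exists_mem_ne_zero_of_ne_bot hI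
    exact ⟨⟨Ideal.span {x}, by simpa using hx0⟩, Submodule.fg_span_singleton x,
      (Ideal.span_singleton_le_iff_mem I).2 hxI⟩
  -- Adjoining `x ∈ I` to a `J` of maximal closure cannot enlarge it, so `x` already lies in it.
  obtain ⟨⟨J, hJ⟩, ⟨hJfg, hJI⟩, hmax⟩ := exists_maximalFor_of_wellFoundedGT _ closure hne
  refine ⟨J, hJ, hJfg, hJI, fun x hxI => ?_⟩
  have hJx : J ⊔ Ideal.span {x} ≠ ⊥ := ne_bot_of_le_ne_bot hJ le_sup_left
  have hle : J ⊔ Ideal.span {x} ≤ quasiStarClosure star (J ⊔ Ideal.span {x}) :=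
    hstar.le_quasiStarClosure hJx
  have hcl : quasiStarClosure star (J ⊔ Ideal.span {x}) ≤ quasiStarClosure star J :=
    hmax (j := ⟨_, hJx⟩)
      ⟨Submodule.FG.sup hJfg (Submodule.fg_span_singleton x),
        sup_le hJI ((Ideal.span_singleton_le_iff_mem I).2 hxI)⟩
      (hstar.quasiStarClosure_le_of_le hJ hJx (le_sup_left.trans hle))
  exact hcl (hle (Ideal.mem_sup_right (Ideal.mem_span_singleton_self x)))

theorem finTypeOp_idealExt_eq_star (hstar : IsNonzeroClosure star) (hN : StarNoetherian star)
    (hI : I ≠ ⊥) : finTypeOp star (idealExt K I) = star (idealExt K I) := by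
  obtain ⟨J, hJ, hJfg, hJI, hIJ⟩ := hstar.exists_fg_le_quasiStarClosure hN hI
  exact hstar.finTypeOp_eq_star_of_fg (idealExt_ne_bot hJ) (Submodule.FG.map _ hJfg)
    (Submodule.map_mono hJI) (Submodule.map_le_iff_le_comap.2 hIJ)

theorem quasiStarIdeal_finTypeOp (hstar : IsNonzeroClosure star) (hI : QuasiStarIdeal star I) :
    QuasiStarIdeal (finTypeOp star) I := by
  refine ⟨hI.1, le_antisymm ?_ (Submodule.map_le_iff_le_comap.1 (hstar.le_finTypeOp _))⟩
  calc
    quasiStarClosure (finTypeOp star) I ≤ quasiStarClosure star I :=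
      Submodule.comap_mono (hstar.finTypeOp_le_star (idealExt_ne_bot hI.1))
    _ = I := hI.2

end IsNonzeroClosure

theorem starNoetherian_iff_finType_starNoetherian_general (hstar : IsNonzeroClosure star) :
    StarNoetherian star ↔ StarNoetherian (finTypeOp star) := by
  constructor
  · intro hN
    refine hN.of_quasiStarIdeal_imp fun I ⟨hI, hcl⟩ => ⟨hI, ?_⟩
    rwa [← hstar.finTypeOp_idealExt_eq_star hN hI]
  · intro hN
    exact hN.of_quasiStarIdeal_imp fun _ => hstar.quasiStarIdeal_finTypeOp

end NonzeroClosure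

/-- `D` an integral domain, `⋆` a semistar operation on `D`. Then `D` is
⋆-Noetherian iff `D` is ⋆_f-Noetherian. -/
theorem starNoetherian_iff_finType_starNoetherian
    (star : Submodule D K → Submodule D K) (hstar : IsSemistarOperation star) :
    StarNoetherian star ↔ StarNoetherian (finTypeOp star) :=
  starNoetherian_iff_finType_starNoetherian_general hstar.isNonzeroClosure

end Statement
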